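/- arXiv:2507.19139 — 2 statements merged into one kernel-verified Lean document; each statement's English description precedes it below -/
import Mathlib

section
/- Let S = {s1, …, sk} be a set of pairwise matching strings of length n over Σ, and let s* be a string of length n that is matching with every string of S. Then for every i ∈ {1, …, k}, ∂S(s*, s_i) = ∂Ham(h_{s1,s*}, h_{s1,s_i}). -/
/-!
Strings of length `n` over an alphabet `α` are modelled as functions `ℕ → α`,
where only the values at positions `0, …, n-1` (0-indexed) are relevant.
A swap at (0-indexed) position `p` exchanges the letters at positions `p` and `p+1`.
A swap permutation is modelled as a `Finset ℕ` of swap positions, pairwise at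
distance ≥ 2 (equivalently: containing no two consecutive positions).
-/

universe u

variable {α : Type u}

/-- `P` is a swap permutation for strings of length `n`: every swap position is in range
and no two swaps overlap (positions are pairwise at distance ≥ 2). -/
def IsSwapSet (n : ℕ) (P : Finset ℕ) : Prop :=
  (∀ p ∈ P, p + 1 < n) ∧ (∀ p ∈ P, p + 1 ∉ P)

/-- Apply a set of pairwise disjoint swaps to a string. -/
def applySwaps (P : Finset ℕ) (s : ℕ → α) : ℕ → α := fun i =>
  if i ∈ P then s (i + 1)
  else if 0 < i ∧ i - 1 ∈ P then s (i - 1)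
  else s i

/-- The swap permutation `P` transforms `s1` into `s2` (as length-`n` strings). -/
def Transforms (n : ℕ) (P : Finset ℕ) (s1 s2 : ℕ → α) : Prop :=
  IsSwapSet n P ∧ ∀ i < n, applySwaps P s1 i = s2 i

/-- Two length-`n` strings are matching if some swap permutation transforms one
into the other. -/
def SwMatching (n : ℕ) (s1 s2 : ℕ → α) : Prop :=
  ∃ P : Finset ℕ, Transforms n P s1 s2

/-- `P` is a *valid* swap permutation transforming `s1` into `s2`:
it transforms `s1` into `s2` and never swaps two identical letters. -/
def ValidTransform (n : ℕ) (P : Finset ℕ) (s1 s2 : ℕ → α) : Prop :=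
  Transforms n P s1 s2 ∧ ∀ p ∈ P, s1 p ≠ s1 (p + 1)

/-- Hamming distance of two length-`n` strings. -/
noncomputable def hamDist {β : Type*} (n : ℕ) (s t : ℕ → β) : ℕ :=
  letI : DecidablePred (fun i => s i ≠ t i) := fun _ => Classical.propDecidable _
  ((Finset.range n).filter (fun i => s i ≠ t i)).card

/-- Swap distance: the number of swaps of the valid swap permutation transforming
`s1` into `s2` (unique when it exists), and `⊤` if the strings are not matching. -/
noncomputable def swapDist (n : ℕ) (s1 s2 : ℕ → α) : ℕ∞ :=
  sInf {m : ℕ∞ | ∃ P : Finset ℕ, ValidTransform n P s1 s2 ∧ m = (P.card : ℕ∞)}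

/-- Swap+Hamming distance: minimum over all length-`n` strings `t` of
`∂S(s1,t) + ∂Ham(t,s2)`. -/
noncomputable def shDist (n : ℕ) (s1 s2 : ℕ → α) : ℕ∞ :=
  ⨅ t : ℕ → α, swapDist n s1 t + (hamDist n t s2 : ℕ∞)

/-- Number of occurrences of the letter `x` at positions `a ≤ i < b` of the string `s`. -/
noncomputable def countIn {β : Type*} (s : ℕ → β) (a b : ℕ) (x : β) : ℕ :=
  letI : DecidablePred (fun i => s i = x) := fun _ => Classical.propDecidable _
  ((Finset.Ico a b).filter (fun i => s i = x)).card

/-- Greedy (left-to-right) swap set between two strings: position `p` is greedily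
swapped iff `s1[p] = s2[p+1]`, `s1[p+1] = s2[p]`, `s1[p] ≠ s1[p+1]`, and position
`p-1` was not swapped. -/
def greedyMem (s1 s2 : ℕ → α) : ℕ → Prop
  | 0 => s1 0 = s2 1 ∧ s1 1 = s2 0 ∧ s1 0 ≠ s1 1
  | p + 1 => (s1 (p + 1) = s2 (p + 2) ∧ s1 (p + 2) = s2 (p + 1) ∧ s1 (p + 1) ≠ s1 (p + 2))
      ∧ ¬ greedyMem s1 s2 p

/-- The greedy swap set `G(s1,s2)` restricted to the valid positions `0, …, n-2`. -/
noncomputable def greedySet (n : ℕ) (s1 s2 : ℕ → α) : Finset ℕ :=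
  letI : DecidablePred (greedyMem s1 s2) := fun _ => Classical.propDecidable _
  (Finset.range (n - 1)).filter (greedyMem s1 s2)

/-- `SW(S, t, i)`: the set of indices `j` such that `t` and `s j` have a greedy swap
at position `i`. -/
noncomputable def SW (n : ℕ) {k : ℕ} (s : Fin k → ℕ → α) (t : ℕ → α) (i : ℕ) :
    Finset (Fin k) :=
  letI : DecidablePred (fun j : Fin k => i ∈ greedySet n t (s j)) :=
    fun _ => Classical.propDecidable _
  Finset.univ.filter (fun j => i ∈ greedySet n t (s j))

/-- The swap `(p, p+1)` is necessary for the input string `s i` if every string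
matching all strings of `S` has a swap at position `p` in its valid swap
permutation towards `s i`. -/
def NecessarySwap (n : ℕ) {k : ℕ} (s : Fin k → ℕ → α) (i : Fin k) (p : ℕ) : Prop :=
  ∀ t : ℕ → α, (∀ j, SwMatching n t (s j)) →
    ∀ P : Finset ℕ, ValidTransform n P t (s i) → p ∈ P

/-- Lexicographic strict order on length-`n` strings. -/
def LexLt {β : Type*} [LinearOrder β] (n : ℕ) (s t : ℕ → β) : Prop :=
  ∃ i < n, s i < t i ∧ ∀ j < i, s j = t j

/-!
For each position `p`, a swap permutation preserves the multiset of letters in the prefix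
`s[0..p]`, unless it swaps at `p`, in which case one copy of `s[p]` is replaced by `s[p+1]`.
Hence a valid swap permutation swaps at `p` exactly when the prefix contents of the source and
the target differ.

If `P` and `Q` transform `s` validly into `t` and `u`, a swap at `p` changes the prefix content of
`s` in the same way in both, so the prefix contents of `t` and `u` differ exactly when `p` belongs
to one of `P` and `Q` only. The valid swap permutation from `t` to `u` is therefore the symmetric
difference of `P` and `Q`.
-/

/-- The multiset of the first `m` letters of `s`: the invariant from which the swap positions of a
valid swap permutation are read off. Letters are kept with multiplicity but without order. -/
def prefixContent (s : ℕ → α) (m : ℕ) : Multiset α := (Multiset.range m).map s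

theorem prefixContent_succ (s : ℕ → α) (m : ℕ) :
    prefixContent s (m + 1) = s m ::ₘ prefixContent s m := by
  simp only [prefixContent, Multiset.range_succ, Multiset.map_cons]

section ApplySwaps

variable {P : Finset ℕ} {s : ℕ → α} {i : ℕ}

theorem applySwaps_of_mem (hi : i ∈ P) : applySwaps P s i = s (i + 1) := if_pos hi

theorem applySwaps_succ_of_mem (hi : i ∈ P) (hi' : i + 1 ∉ P) :
    applySwaps P s (i + 1) = s i := by
  simp [applySwaps, hi, hi']

theorem applySwaps_zero_of_notMem (h : 0 ∉ P) : applySwaps P s 0 = s 0 := by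
  simp [applySwaps, h]

theorem applySwaps_succ_of_notMem (hi : i ∉ P) (hi' : i + 1 ∉ P) :
    applySwaps P s (i + 1) = s (i + 1) := by
  simp [applySwaps, hi, hi']

theorem prefixContent_applySwaps_succ (hP : ∀ q ∈ P, q + 1 ∉ P) (p : ℕ) :
    prefixContent (applySwaps P s) (p + 1) =
      (if p ∈ P then s (p + 1) else s p) ::ₘ prefixContent s p := by
  induction p with
  | zero =>
    by_cases h0 : 0 ∈ P
    · rw [if_pos h0, prefixContent_succ, applySwaps_of_mem h0]
      rfl
    · rw [if_neg h0, prefixContent_succ, applySwaps_zero_of_notMem h0]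
      rfl
  | succ p ih =>
    rw [prefixContent_succ, ih, prefixContent_succ s p]
    by_cases hp : p ∈ P
    · have hp' : p + 1 ∉ P := hP p hp
      rw [if_pos hp, if_neg hp', applySwaps_succ_of_mem hp hp', Multiset.cons_swap]
    · by_cases hp' : p + 1 ∈ P
      · rw [if_neg hp, if_pos hp', applySwaps_of_mem hp']
      · rw [if_neg hp, if_neg hp', applySwaps_succ_of_notMem hp hp']

theorem applySwaps_filter_ne [DecidableEq α] (hP : ∀ q ∈ P, q + 1 ∉ P) :
    applySwaps {p ∈ P | s p ≠ s (p + 1)} s = applySwaps P s := by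
  funext i
  cases i with
  | zero =>
    simp only [applySwaps, Finset.mem_filter]
    grind
  | succ i =>
    have hdisj := hP i
    simp only [applySwaps, Finset.mem_filter, Nat.add_sub_cancel]
    grind

end ApplySwaps

theorem prefixContent_congr {s t : ℕ → α} {m : ℕ} (h : ∀ i < m, s i = t i) :
    prefixContent s m = prefixContent t m :=
  Multiset.map_congr rfl fun i hi => h i (Multiset.mem_range.1 hi)

theorem IsSwapSet.mono {n : ℕ} {P Q : Finset ℕ} (hP : IsSwapSet n P) (h : Q ⊆ P) :
    IsSwapSet n Q :=
  ⟨fun p hp => hP.1 p (h hp), fun p hp hp' => hP.2 p (h hp) (h hp')⟩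

theorem IsSwapSet.lt_of_mem {n p : ℕ} {P : Finset ℕ} (hP : IsSwapSet n P) (hp : p ∈ P) : p < n :=
  Nat.lt_of_succ_lt (hP.1 p hp)

theorem IsSwapSet.subset_range_pred {n : ℕ} {P : Finset ℕ} (hP : IsSwapSet n P) :
    P ⊆ Finset.range (n - 1) :=
  fun p hp => Finset.mem_range.2 (Nat.lt_sub_of_add_lt (hP.1 p hp))

theorem SwMatching.exists_validTransform {n : ℕ} {s t : ℕ → α} (h : SwMatching n s t) :
    ∃ P : Finset ℕ, ValidTransform n P s t := by
  classical
  obtain ⟨P, hP, happ⟩ := h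
  refine ⟨{p ∈ P | s p ≠ s (p + 1)}, ⟨hP.mono (Finset.filter_subset _ _), ?_⟩,
    fun p hp => (Finset.mem_filter.1 hp).2⟩
  rwa [applySwaps_filter_ne hP.2]

theorem Transforms.prefixContent_succ_eq {n : ℕ} {P : Finset ℕ} {s t : ℕ → α}
    (h : Transforms n P s t) {p : ℕ} (hp : p < n) :
    prefixContent t (p + 1) = (if p ∈ P then s (p + 1) else s p) ::ₘ prefixContent s p := by
  rw [← prefixContent_applySwaps_succ h.1.2]
  exact prefixContent_congr fun i hi => (h.2 i (by omega)).symm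

namespace ValidTransform

variable {n : ℕ} {P Q R : Finset ℕ} {s t u : ℕ → α}

theorem mem_iff_prefixContent_ne (hP : ValidTransform n P s t) {p : ℕ} (hp : p < n) :
    p ∈ P ↔ prefixContent s (p + 1) ≠ prefixContent t (p + 1) := by
  rw [hP.1.prefixContent_succ_eq hp, prefixContent_succ]
  by_cases hpP : p ∈ P
  · simp [hpP, hP.2 p hpP]
  · simp [hpP]

theorem eq_symmDiff (hP : ValidTransform n P s t) (hQ : ValidTransform n Q s u)
    (hR : ValidTransform n R t u) : R = symmDiff P Q := by
  ext p
  rw [Finset.mem_symmDiff]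
  by_cases hp : p < n
  · rw [hR.mem_iff_prefixContent_ne hp, hP.1.prefixContent_succ_eq hp,
      hQ.1.prefixContent_succ_eq hp]
    by_cases hpP : p ∈ P <;> by_cases hpQ : p ∈ Q
    · simp [hpP, hpQ]
    · simp [hpP, hpQ, (hP.2 p hpP).symm]
    · simp [hpP, hpQ, hQ.2 p hpQ]
    · simp [hpP, hpQ]
  · have hpP : p ∉ P := fun h => hp (hP.1.1.lt_of_mem h)
    have hpQ : p ∉ Q := fun h => hp (hQ.1.1.lt_of_mem h)
    have hpR : p ∉ R := fun h => hp (hR.1.1.lt_of_mem h)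
    simp only [hpP, hpQ, hpR, false_and, or_false]

theorem refl_empty (n : ℕ) (s : ℕ → α) : ValidTransform n ∅ s s := by
  simp [ValidTransform, Transforms, IsSwapSet, applySwaps]

theorem unique (hP : ValidTransform n P s t) (hQ : ValidTransform n Q s t) : P = Q :=
  ((refl_empty n s).eq_symmDiff hQ hP).trans (bot_symmDiff Q)

theorem swapDist_eq_card (hP : ValidTransform n P s t) : swapDist n s t = P.card := by
  have hset : {m : ℕ∞ | ∃ Q : Finset ℕ, ValidTransform n Q s t ∧ m = Q.card} = {(P.card : ℕ∞)} := by
    refine Set.eq_singleton_iff_unique_mem.2 ⟨⟨P, hP, rfl⟩, ?_⟩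
    rintro _ ⟨Q, hQ, rfl⟩
    rw [hQ.unique hP]
  rw [swapDist, hset, sInf_singleton]

end ValidTransform

theorem hamDist_decide_mem {m : ℕ} {P Q : Finset ℕ} (hP : P ⊆ Finset.range m)
    (hQ : Q ⊆ Finset.range m) :
    hamDist m (fun p => decide (p ∈ P)) (fun p => decide (p ∈ Q)) = (symmDiff P Q).card := by
  unfold hamDist
  congr 1
  ext p
  have hPp := @hP p
  have hQp := @hQ p
  simp only [Finset.mem_filter, ne_eq, decide_eq_decide, Finset.mem_symmDiff]
  tauto

theorem swapDist_eq_hamDist_of_swapStrings_general {n : ℕ} {P Q : Finset ℕ} {s t u : ℕ → α}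
    (htu : SwMatching n t u) (hP : ValidTransform n P s t) (hQ : ValidTransform n Q s u) :
    swapDist n t u
      = (hamDist (n - 1) (fun p => decide (p ∈ P)) (fun p => decide (p ∈ Q)) : ℕ∞) := by
  obtain ⟨R, hR⟩ := htu.exists_validTransform
  rw [hR.swapDist_eq_card, hP.eq_symmDiff hQ hR,
    hamDist_decide_mem hP.1.1.subset_range_pred hQ.1.1.subset_range_pred]

/-- Let `S = {s 0, …, s (k-1)}` be pairwise matching strings of length
`n` and let `s*` be matching with every string of `S`. Then for every `i`,
`∂S(s*, s i) = ∂Ham(h_{s1,s*}, h_{s1,s i})`, where the swap strings (of length `n-1`)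
are the indicator strings of the valid swap permutations `P = π(s1, s*)` and
`Q = π(s1, s i)` (with `s1 = s 0`). -/
theorem swapDist_eq_hamDist_of_swapStrings {α : Type u} (n k : ℕ) (hk : 0 < k)
    (s : Fin k → ℕ → α)
    (hpair : ∀ i j, SwMatching n (s i) (s j))
    (sstar : ℕ → α) (hstar : ∀ i, SwMatching n sstar (s i))
    (i : Fin k) (P Q : Finset ℕ)
    (hP : ValidTransform n P (s ⟨0, hk⟩) sstar)
    (hQ : ValidTransform n Q (s ⟨0, hk⟩) (s i)) :
    swapDist n sstar (s i)
      = (hamDist (n - 1) (fun p => decide (p ∈ P)) (fun p => decide (p ∈ Q)) : ℕ∞) :=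
  swapDist_eq_hamDist_of_swapStrings_general (hstar i) hP hQ
end

section
/- For any two strings s1, s2 of length n over Σ, ∂SH(s1,s2) = ∂Ham(s1,s2) − |G(s1,s2)|, where G(s1,s2) is the greedy swap set; i.e., the greedy left-to-right strategy of taking every available disjoint swap computes the Swap+Hamming distance. -/
/-!
Strings of length `n` over an alphabet `α` are modelled as functions `ℕ → α`,
where only the values at positions `0, …, n-1` (0-indexed) are relevant.
A swap at (0-indexed) position `p` exchanges the letters at positions `p` and `p+1`.
A swap permutation is modelled as a `Finset ℕ` of swap positions, pairwise at
distance ≥ 2 (equivalently: containing no two consecutive positions).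
-/

universe u

variable {α : Type u}

/-!
A swap changes only the two letters it exchanges, so the effect of a set of disjoint swaps on the
Hamming distance is a sum of local contributions. An available swap repairs two mismatches at cost
one; any other swap repairs at most one and therefore never pays for itself. Hence `∂SH` is `∂Ham`
minus the largest number of disjoint available swaps. The greedy set attains this number: it omits
an available swap `p` only when it contains `p - 1`, and a competitor containing `p` does not
contain `p - 1`, so the two can be exchanged.
-/

/-- The discrete distance between two letters, the contribution of one position to the Hamming
distance. -/
noncomputable def mismatch (a b : α) : ℕ :=
  letI := Classical.propDecidable (a = b)
  if a = b then 0 else 1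

theorem mismatch_self (a : α) : mismatch a a = 0 := if_pos rfl

theorem mismatch_of_ne {a b : α} (h : a ≠ b) : mismatch a b = 1 := if_neg h

theorem mismatch_le_one (a b : α) : mismatch a b ≤ 1 := by
  unfold mismatch
  split_ifs <;> decide

theorem mismatch_eq_zero {a b : α} : mismatch a b = 0 ↔ a = b := by
  simp [mismatch]

theorem hamDist_eq_sum_mismatch (n : ℕ) (s t : ℕ → α) :
    hamDist n s t = ∑ i ∈ Finset.range n, mismatch (s i) (t i) := by
  classical
  simp only [hamDist, mismatch, Finset.card_filter, ne_eq, ite_not]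

/-- The positions whose letter is moved by the swaps at the positions in `P`. -/
def movedPositions (P : Finset ℕ) : Finset ℕ := P ∪ P.image (· + 1)

theorem mem_movedPositions {P : Finset ℕ} {i : ℕ} :
    i ∈ movedPositions P ↔ i ∈ P ∨ ∃ p ∈ P, p + 1 = i := by
  simp only [movedPositions, Finset.mem_union, Finset.mem_image]

theorem sum_movedPositions {M : Type*} [AddCommMonoid M] {P : Finset ℕ}
    (hP : ∀ p ∈ P, p + 1 ∉ P) (f : ℕ → M) :
    ∑ i ∈ movedPositions P, f i = ∑ p ∈ P, (f p + f (p + 1)) := by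
  have hdisj : Disjoint P (P.image (· + 1)) := by
    rw [Finset.disjoint_right]
    intro i hi
    obtain ⟨p, hp, rfl⟩ := Finset.mem_image.1 hi
    exact hP p hp
  rw [movedPositions, Finset.sum_union hdisj,
    Finset.sum_image (add_left_injective 1).injOn, Finset.sum_add_distrib]

theorem card_le_of_subset_movedPositions {P Q : Finset ℕ}
    (hQ : ∀ p ∈ Q, p + 1 ∉ Q) (hQP : Q ⊆ movedPositions P) : Q.card ≤ P.card := by
  have exchange : Q \ P ⊆ (P \ Q).image (· + 1) := by
    intro i hi
    obtain ⟨hiQ, hiP⟩ := Finset.mem_sdiff.1 hi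
    obtain ⟨p, hp, rfl⟩ := (mem_movedPositions.1 (hQP hiQ)).resolve_left hiP
    exact Finset.mem_image_of_mem _ (Finset.mem_sdiff.2 ⟨hp, fun hpQ => hQ p hpQ hiQ⟩)
  exact Finset.card_sdiff_le_card_sdiff_iff.1
    ((Finset.card_le_card exchange).trans Finset.card_image_le)

namespace IsSwapSet

variable {n : ℕ} {P Q : Finset ℕ}

theorem mono_s9 (hP : IsSwapSet n P) (hQP : Q ⊆ P) : IsSwapSet n Q :=
  ⟨fun p hp => hP.1 p (hQP hp), fun p hp hp' => hP.2 p (hQP hp) (hQP hp')⟩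

theorem movedPositions_subset_range (hP : IsSwapSet n P) :
    movedPositions P ⊆ Finset.range n := by
  intro i hi
  rw [Finset.mem_range]
  rcases mem_movedPositions.1 hi with hi | ⟨p, hp, rfl⟩
  · exact (Nat.lt_succ_self i).trans (hP.1 i hi)
  · exact hP.1 p hp

end IsSwapSet

namespace Transforms

variable {n : ℕ} {P : Finset ℕ} {s t : ℕ → α}

theorem apply_of_mem (h : Transforms n P s t) {p : ℕ} (hp : p ∈ P) : t p = s (p + 1) := by
  have hpn := h.1.1 p hp
  rw [← h.2 p (by omega), applySwaps, if_pos hp]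

theorem apply_succ_of_mem (h : Transforms n P s t) {p : ℕ} (hp : p ∈ P) : t (p + 1) = s p := by
  rw [← h.2 _ (h.1.1 p hp), applySwaps, if_neg (h.1.2 p hp), if_pos ⟨p.succ_pos, hp⟩,
    Nat.add_sub_cancel]

theorem apply_of_notMem (h : Transforms n P s t) {i : ℕ} (hi : i < n)
    (hiP : i ∉ movedPositions P) : t i = s i := by
  rw [mem_movedPositions, not_or] at hiP
  have hpred : ¬(0 < i ∧ i - 1 ∈ P) := fun hpred =>
    hiP.2 ⟨i - 1, hpred.2, Nat.sub_add_cancel hpred.1⟩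
  rw [← h.2 i hi, applySwaps, if_neg hiP.1, if_neg hpred]

/-- The contributions of the swapped pairs stand crosswise to avoid a subtraction. -/
theorem hamDist_add_sum_mismatch (h : Transforms n P s t) (u : ℕ → α) :
    hamDist n s u + ∑ p ∈ P, (mismatch (s (p + 1)) (u p) + mismatch (s p) (u (p + 1))) =
      hamDist n t u + ∑ p ∈ P, (mismatch (s p) (u p) + mismatch (s (p + 1)) (u (p + 1))) := by
  have split_moved (v : ℕ → α) : hamDist n v u =
      ∑ i ∈ Finset.range n \ movedPositions P, mismatch (v i) (u i) +
        ∑ p ∈ P, (mismatch (v p) (u p) + mismatch (v (p + 1)) (u (p + 1))) := by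
    rw [hamDist_eq_sum_mismatch, ← sum_movedPositions h.1.2 fun i => mismatch (v i) (u i),
      Finset.sum_sdiff h.1.movedPositions_subset_range]
  have unmoved : ∑ i ∈ Finset.range n \ movedPositions P, mismatch (t i) (u i) =
      ∑ i ∈ Finset.range n \ movedPositions P, mismatch (s i) (u i) :=
    Finset.sum_congr rfl fun i hi => by
      rw [Finset.mem_sdiff, Finset.mem_range] at hi
      rw [h.apply_of_notMem hi.1 hi.2]
  have moved : ∑ p ∈ P, (mismatch (t p) (u p) + mismatch (t (p + 1)) (u (p + 1))) =
      ∑ p ∈ P, (mismatch (s (p + 1)) (u p) + mismatch (s p) (u (p + 1))) :=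
    Finset.sum_congr rfl fun p hp => by rw [h.apply_of_mem hp, h.apply_succ_of_mem hp]
  rw [split_moved s, split_moved t, unmoved, moved, add_right_comm]

end Transforms

/-- Swapping the distinct letters `s1 p` and `s1 (p + 1)` makes both agree with `s2`. These are the
swaps among which the greedy strategy chooses. -/
def SwapAvailable (s1 s2 : ℕ → α) (p : ℕ) : Prop :=
  s1 p = s2 (p + 1) ∧ s1 (p + 1) = s2 p ∧ s1 p ≠ s1 (p + 1)

namespace SwapAvailable

variable {s u : ℕ → α} {p : ℕ}

theorem mismatch_add_mismatch (h : SwapAvailable s u p) :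
    mismatch (s p) (u p) + mismatch (s (p + 1)) (u (p + 1)) = 2 := by
  rw [← h.1, ← h.2.1, mismatch_of_ne h.2.2, mismatch_of_ne h.2.2.symm]

theorem mismatch_add_mismatch_swapped (h : SwapAvailable s u p) :
    mismatch (s (p + 1)) (u p) + mismatch (s p) (u (p + 1)) = 0 := by
  rw [← h.1, ← h.2.1, mismatch_self, mismatch_self]

end SwapAvailable

theorem mismatch_add_mismatch_le_of_not_swapAvailable {s u : ℕ → α} {p : ℕ}
    (h : ¬SwapAvailable s u p) :
    mismatch (s p) (u p) + mismatch (s (p + 1)) (u (p + 1)) ≤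
      mismatch (s (p + 1)) (u p) + mismatch (s p) (u (p + 1)) + 1 := by
  rcases eq_or_ne (s p) (s (p + 1)) with heq | hne
  · rw [heq]
    exact Nat.le_succ _
  · have mismatch_remains :
        mismatch (s (p + 1)) (u p) ≠ 0 ∨ mismatch (s p) (u (p + 1)) ≠ 0 := by
      simp only [ne_eq, mismatch_eq_zero, ← not_and_or]
      exact fun hswap => h ⟨hswap.2, hswap.1, hne⟩
    have hp := mismatch_le_one (s p) (u p)
    have hp' := mismatch_le_one (s (p + 1)) (u (p + 1))
    omega

namespace Transforms

variable {n : ℕ} {P : Finset ℕ} {s t u : ℕ → α}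

theorem hamDist_eq_add_two_mul_card (h : Transforms n P s t)
    (hP : ∀ p ∈ P, SwapAvailable s u p) : hamDist n s u = hamDist n t u + 2 * P.card := by
  have hsum := h.hamDist_add_sum_mismatch u
  rwa [Finset.sum_eq_zero fun p hp => (hP p hp).mismatch_add_mismatch_swapped,
    Finset.sum_const_nat fun p hp => (hP p hp).mismatch_add_mismatch, add_zero,
    mul_comm P.card] at hsum

theorem hamDist_le_add_card_add_card [DecidablePred (SwapAvailable s u)] (h : Transforms n P s t) :
    hamDist n s u ≤ hamDist n t u + P.card + (P.filter (SwapAvailable s u)).card := by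
  have hlocal : ∀ p ∈ P, mismatch (s p) (u p) + mismatch (s (p + 1)) (u (p + 1)) ≤
      mismatch (s (p + 1)) (u p) + mismatch (s p) (u (p + 1)) + 1 +
        if SwapAvailable s u p then 1 else 0 := by
    intro p _
    split_ifs with hp
    · rw [hp.mismatch_add_mismatch]
      omega
    · exact mismatch_add_mismatch_le_of_not_swapAvailable hp
  have hsum : ∑ p ∈ P, (mismatch (s p) (u p) + mismatch (s (p + 1)) (u (p + 1))) ≤
      ∑ p ∈ P, (mismatch (s (p + 1)) (u p) + mismatch (s p) (u (p + 1))) + P.card +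
        (P.filter (SwapAvailable s u)).card := by
    refine (Finset.sum_le_sum hlocal).trans_eq ?_
    rw [Finset.card_filter, Finset.card_eq_sum_ones, Finset.sum_add_distrib,
      Finset.sum_add_distrib]
  have hbalance := h.hamDist_add_sum_mismatch u
  omega

end Transforms

namespace greedyMem

variable {s1 s2 : ℕ → α} {p : ℕ}

theorem swapAvailable (h : greedyMem s1 s2 p) : SwapAvailable s1 s2 p := by
  cases p with
  | zero => exact h
  | succ p => exact h.1

theorem not_succ (h : greedyMem s1 s2 p) : ¬greedyMem s1 s2 (p + 1) := fun h' => h'.2 h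

end greedyMem

theorem SwapAvailable.greedyMem_or_exists_succ {s1 s2 : ℕ → α} {p : ℕ}
    (h : SwapAvailable s1 s2 p) : greedyMem s1 s2 p ∨ ∃ q, greedyMem s1 s2 q ∧ q + 1 = p := by
  cases p with
  | zero => exact Or.inl h
  | succ p =>
    by_cases hp : greedyMem s1 s2 p
    · exact Or.inr ⟨p, hp, rfl⟩
    · exact Or.inl ⟨h, hp⟩

section greedySet

variable {n : ℕ} {s1 s2 : ℕ → α}

theorem mem_greedySet {p : ℕ} :
    p ∈ greedySet n s1 s2 ↔ p + 1 < n ∧ greedyMem s1 s2 p := by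
  simp only [greedySet, Finset.mem_filter, Finset.mem_range, Nat.lt_sub_iff_add_lt]

theorem swapAvailable_of_mem_greedySet {p : ℕ} (hp : p ∈ greedySet n s1 s2) :
    SwapAvailable s1 s2 p :=
  (mem_greedySet.1 hp).2.swapAvailable

theorem isSwapSet_greedySet (n : ℕ) (s1 s2 : ℕ → α) : IsSwapSet n (greedySet n s1 s2) :=
  ⟨fun _ hp => (mem_greedySet.1 hp).1,
    fun _ hp hp' => (mem_greedySet.1 hp).2.not_succ (mem_greedySet.1 hp').2⟩

theorem validTransform_greedySet (n : ℕ) (s1 s2 : ℕ → α) :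
    ValidTransform n (greedySet n s1 s2) s1 (applySwaps (greedySet n s1 s2) s1) :=
  ⟨⟨isSwapSet_greedySet n s1 s2, fun _ _ => rfl⟩,
    fun _ hp => (swapAvailable_of_mem_greedySet hp).2.2⟩

theorem mem_movedPositions_greedySet {p : ℕ} (hpn : p + 1 < n) (hp : SwapAvailable s1 s2 p) :
    p ∈ movedPositions (greedySet n s1 s2) := by
  rw [mem_movedPositions]
  rcases hp.greedyMem_or_exists_succ with hp | ⟨q, hq, rfl⟩
  · exact Or.inl (mem_greedySet.2 ⟨hpn, hp⟩)
  · exact Or.inr ⟨q, mem_greedySet.2 ⟨(Nat.lt_succ_self _).trans hpn, hq⟩, rfl⟩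

end greedySet

theorem IsSwapSet.card_le_card_greedySet {n : ℕ} {s1 s2 : ℕ → α} {Q : Finset ℕ}
    (hQ : IsSwapSet n Q) (hav : ∀ p ∈ Q, SwapAvailable s1 s2 p) :
    Q.card ≤ (greedySet n s1 s2).card :=
  card_le_of_subset_movedPositions hQ.2 fun p hp =>
    mem_movedPositions_greedySet (hQ.1 p hp) (hav p hp)

theorem Transforms.hamDist_le_add_card_add_card_greedySet {n : ℕ} {P : Finset ℕ}
    {s1 s2 t : ℕ → α} (h : Transforms n P s1 t) :
    hamDist n s1 s2 ≤ hamDist n t s2 + P.card + (greedySet n s1 s2).card := by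
  classical
  refine h.hamDist_le_add_card_add_card.trans (Nat.add_le_add_left ?_ _)
  exact (h.1.mono_s9 (Finset.filter_subset _ P)).card_le_card_greedySet fun p hp =>
    (Finset.mem_filter.1 hp).2

theorem shDist_eq_iInf_validTransform (n : ℕ) (s1 s2 : ℕ → α) :
    shDist n s1 s2 = ⨅ (t : ℕ → α) (P : Finset ℕ) (_ : ValidTransform n P s1 t),
      ((P.card + hamDist n t s2 : ℕ) : ℕ∞) := by
  have swapDist_eq_iInf (t : ℕ → α) :
      swapDist n s1 t = ⨅ (P : Finset ℕ) (_ : ValidTransform n P s1 t), (P.card : ℕ∞) := by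
    refine le_antisymm (le_iInf₂ fun P hP => sInf_le ⟨P, hP, rfl⟩) (le_sInf ?_)
    rintro _ ⟨P, hP, rfl⟩
    exact iInf₂_le P hP
  simp only [shDist, swapDist_eq_iInf, ENat.iInf_add, Nat.cast_add]

/-- The greedy left-to-right strategy computes the Swap+Hamming
distance: `∂SH(s1,s2) = ∂Ham(s1,s2) − |G(s1,s2)|`, where `G(s1,s2)` is the greedy
swap set. -/
theorem shDist_eq_hamDist_sub_greedy {α : Type u} (n : ℕ) (s1 s2 : ℕ → α) :
    shDist n s1 s2 = ((hamDist n s1 s2 - (greedySet n s1 s2).card : ℕ) : ℕ∞) := by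
  have hG := validTransform_greedySet n s1 s2
  have hbalance := hG.1.hamDist_eq_add_two_mul_card fun _ => swapAvailable_of_mem_greedySet
  rw [shDist_eq_iInf_validTransform]
  apply le_antisymm
  · refine iInf_le_of_le _ (iInf₂_le_of_le _ hG ?_)
    rw [Nat.cast_le]
    omega
  · refine le_iInf fun t => le_iInf₂ fun P hP => ?_
    have hle := hP.1.hamDist_le_add_card_add_card_greedySet (s2 := s2)
    rw [Nat.cast_le]
    omega
end
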